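/- Let f_i : ℝ^d → ℝ, i ∈ {1,…,n}, be twice continuously differentiable with ‖∇²f_i(x) − ∇²f_i(y)‖ ≤ H‖x − y‖ (spectral norm), let f := (1/n)Σ_i f_i be μ-strongly convex (μ > 0), and let x* satisfy ∇f(x*) = 0. For each i, let {B_i^{jl} : j,l ∈ [d]} be real d×d matrices with ‖B_i^{jl}‖_F ≤ R and let ℓ_i : ℝ^d → ℝ^{d×d} satisfy ∇²f_i(x) = Σ_{j,l} (ℓ_i(x))_{jl} B_i^{jl} for all x and ‖ℓ_i(x) − ℓ_i(y)‖_F ≤ M₁‖x − y‖. Set N_B := 1 if for every i the family {B_i^{jl}} is pairwise orthogonal in the Frobenius inner product, and N_B := d² otherwise. Fix 0 < δ ≤ 1 and set A := δ/4, B := 6/δ − 7/2, A_M := 1/4, B_M := 5/2. Consider sequences x^k ∈ ℝ^d and L_i^k ∈ ℝ^{d×d} generated by: L_i^{k+1} = L_i^k + S_i^k where ‖S_i^k − (ℓ_i(x^k) − L_i^k)‖_F² ≤ (1 − δ)‖ℓ_i(x^k) − L_i^k‖_F²; H^k := (1/n)Σ_i Σ_{j,l} (L_i^k)_{jl} B_i^{jl};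 Ĥ^k a symmetric matrix with Ĥ^k ⪰ μI and ‖Ĥ^k − ∇²f(x*)‖_F ≤ ‖H^k − ∇²f(x*)‖_F; x^{k+1} := x^k − (Ĥ^k)⁻¹ ∇f(x^k). Define 𝓗^k := (1/n)Σ_i ‖L_i^k − ℓ_i(x*)‖_F², Φ₂^k := 𝓗^k + (4BM₁²/A_M)‖x^k − x*‖², and θ₁ := 1 − min{4A, A_M}/4. If for every k ≥ 0 one has ‖x^k − x*‖² ≤ A_M μ²/(4H² B_M) and 𝓗^k ≤ A_M μ²/(16 N_B R² B_M), then: (a) Φ₂^k ≤ θ₁^k Φ₂⁰ for all k ≥ 0; and (b) if moreover x^k ≠ x* for all k, then ‖x^{k+1} − x*‖² / ‖x^k − x*‖² ≤ θ₁^k ( A_M H²/(8BM₁²μ²) + 2N_B R²/μ² ) Φ₂⁰ for all k ≥ 0, so the convergence of x^k to x* is superlinear. -/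

import Mathlib

open Matrix Classical

/-- Frobenius inner product of matrices. -/
noncomputable def frobInner {d : ℕ} (M N : Matrix (Fin d) (Fin d) ℝ) : ℝ :=
  ∑ s, ∑ t, M s t * N s t

/-- Frobenius norm squared: sum of squares of all entries. -/
noncomputable def frobSq {d : ℕ} (M : Matrix (Fin d) (Fin d) ℝ) : ℝ :=
  ∑ i, ∑ j, (M i j) ^ 2

/-- Frobenius norm. -/
noncomputable def frobNorm {d : ℕ} (M : Matrix (Fin d) (Fin d) ℝ) : ℝ :=
  Real.sqrt (frobSq M)

/-- Spectral norm (operator 2-norm) of a matrix. -/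
noncomputable def specNorm {d : ℕ} (M : Matrix (Fin d) (Fin d) ℝ) : ℝ :=
  ‖Matrix.toEuclideanCLM (𝕜 := ℝ) M‖

/-- The Hessian matrix of `f` at `x` (the derivative of the gradient). -/
noncomputable def hess {d : ℕ} (f : EuclideanSpace ℝ (Fin d) → ℝ)
    (x : EuclideanSpace ℝ (Fin d)) : Matrix (Fin d) (Fin d) ℝ :=
  fun j l => fderiv ℝ (gradient f) x (EuclideanSpace.single l 1) j

/-! A step of the method contracts the distance to `x*` by a factor governed by the error of the
Hessian estimate plus the distance itself, and the Hessian learning rule contracts the coefficient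
error up to a multiple of the squared distance. Near `x*` the two recursions combine into linear
decay of the Lyapunov function `𝓗 + w ‖x - x*‖²`. The contraction factor of the distance is itself
bounded by a multiple of this Lyapunov function, hence tends to zero. -/

lemma mul_le_of_le_div_mul {a b c e : ℝ} (hb : 0 ≤ b) (hc : 0 ≤ c) (he : 1 ≤ e)
    (h : a ≤ b / (c * e)) : a * c ≤ b :=
  calc a * c ≤ b / (c * e) * c := mul_le_mul_of_nonneg_right h hc
    _ = b / e * (c / c) := by rw [div_mul_eq_div_div_swap]; ring
    _ ≤ b := (mul_le_of_le_one_right (by positivity) (div_self_le_one c)).trans (div_le_self hb he)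

section NormedSpace

variable {ι E F : Type*} [Fintype ι] [NormedAddCommGroup E] [NormedSpace ℝ E]
  [NormedAddCommGroup F] [NormedSpace ℝ F]

lemma norm_average_le [Nonempty ι] {v : ι → E} {b : ℝ} (hv : ∀ i, ‖v i‖ ≤ b) :
    ‖(1 / (Fintype.card ι : ℝ)) • ∑ i, v i‖ ≤ b := by
  have hcard : (0 : ℝ) < Fintype.card ι := by exact_mod_cast Fintype.card_pos
  have hsum : ‖∑ i, v i‖ ≤ Fintype.card ι * b := by
    simpa using norm_sum_le_of_le Finset.univ fun i _ => hv i
  rwa [norm_smul, Real.norm_of_nonneg (by positivity), one_div, inv_mul_le_iff₀ hcard]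

lemma norm_sq_average_le (v : ι → E) :
    ‖(1 / (Fintype.card ι : ℝ)) • ∑ i, v i‖ ^ 2
      ≤ (1 / (Fintype.card ι : ℝ)) * ∑ i, ‖v i‖ ^ 2 := by
  rw [norm_smul, mul_pow, Real.norm_of_nonneg (by positivity)]
  calc (1 / (Fintype.card ι : ℝ)) ^ 2 * ‖∑ i, v i‖ ^ 2
      ≤ (1 / (Fintype.card ι : ℝ)) ^ 2 * (∑ i, ‖v i‖) ^ 2 := by gcongr; exact norm_sum_le _ _
    _ ≤ (1 / (Fintype.card ι : ℝ)) ^ 2 * (Fintype.card ι * ∑ i, ‖v i‖ ^ 2) := by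
        gcongr; exact sq_sum_le_card_mul_sum_sq
    _ = (1 / (Fintype.card ι : ℝ)) * ∑ i, ‖v i‖ ^ 2 := by
        rcases eq_or_ne (Fintype.card ι : ℝ) 0 with h | h
        · simp [h]
        · field_simp

lemma norm_sq_sum_smul_le_card_mul (c : ι → ℝ) {b : ι → E} {R : ℝ} (hb : ∀ p, ‖b p‖ ≤ R) :
    ‖∑ p, c p • b p‖ ^ 2 ≤ Fintype.card ι * R ^ 2 * ∑ p, c p ^ 2 := by
  have hterm (p : ι) : ‖c p • b p‖ ≤ |c p| * R := by
    rw [norm_smul, Real.norm_eq_abs]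
    exact mul_le_mul_of_nonneg_left (hb p) (abs_nonneg _)
  calc ‖∑ p, c p • b p‖ ^ 2
      ≤ (∑ p, |c p| * R) ^ 2 := by
        gcongr; exact norm_sum_le_of_le Finset.univ fun p _ => hterm p
    _ ≤ Fintype.card ι * ∑ p, (|c p| * R) ^ 2 := sq_sum_le_card_mul_sum_sq
    _ = Fintype.card ι * R ^ 2 * ∑ p, c p ^ 2 := by
        simp only [mul_pow, sq_abs, ← Finset.sum_mul]; ring

lemma norm_sq_sum_smul_le_of_orthogonal {E : Type*} [NormedAddCommGroup E]
    [InnerProductSpace ℝ E] (c : ι → ℝ) {b : ι → E} {R : ℝ} (hb : ∀ p, ‖b p‖ ≤ R)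
    (horth : Pairwise fun p q => inner ℝ (b p) (b q) = 0) :
    ‖∑ p, c p • b p‖ ^ 2 ≤ R ^ 2 * ∑ p, c p ^ 2 := by
  have hdiag (p : ι) : inner ℝ (c p • b p) (∑ q, c q • b q) = c p ^ 2 * ‖b p‖ ^ 2 := by
    rw [inner_sum, Fintype.sum_eq_single p fun q hq => by
      rw [real_inner_smul_left, real_inner_smul_right, horth hq.symm, mul_zero, mul_zero],
      real_inner_smul_left, real_inner_smul_right, real_inner_self_eq_norm_sq]
    ring
  rw [← real_inner_self_eq_norm_sq, sum_inner, Finset.mul_sum]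
  refine Finset.sum_le_sum fun p _ => ?_
  rw [hdiag, mul_comm]
  gcongr
  exact hb p

lemma norm_sub_sub_fderiv_apply_le {G : E → F} (hG : Differentiable ℝ G) {H : ℝ} {y : E}
    (hH : ∀ z, ‖fderiv ℝ G z - fderiv ℝ G y‖ ≤ H * ‖z - y‖) (x : E) :
    ‖G x - G y - fderiv ℝ G y (x - y)‖ ≤ H / 2 * ‖x - y‖ ^ 2 := by
  set v := x - y with hv
  have hremainder (t : ℝ) :
      HasDerivAt (fun t : ℝ => G (y + t • v) - G y - t • fderiv ℝ G y v)
        ((fderiv ℝ G (y + t • v) - fderiv ℝ G y) v) t := by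
    have hline : HasDerivAt (fun t : ℝ => y + t • v) v t := by
      simpa using ((hasDerivAt_id t).smul_const v).const_add y
    have hlinear : HasDerivAt (fun t : ℝ => t • fderiv ℝ G y v) (fderiv ℝ G y v) t := by
      simpa using (hasDerivAt_id t).smul_const (fderiv ℝ G y v)
    exact (((hG (y + t • v)).hasFDerivAt.comp_hasDerivAt t hline).sub_const (G y)).fun_sub hlinear
  have hbound (t : ℝ) :
      HasDerivAt (fun t : ℝ => H / 2 * ‖v‖ ^ 2 * t ^ 2) (H * ‖v‖ ^ 2 * t) t :=
    ((hasDerivAt_pow 2 t).const_mul (H / 2 * ‖v‖ ^ 2)).congr_deriv (by norm_num; ring)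
  have hderiv (t : ℝ) (ht : t ∈ Set.Ico (0 : ℝ) 1) :
      ‖(fderiv ℝ G (y + t • v) - fderiv ℝ G y) v‖ ≤ H * ‖v‖ ^ 2 * t :=
    calc ‖(fderiv ℝ G (y + t • v) - fderiv ℝ G y) v‖
        ≤ ‖fderiv ℝ G (y + t • v) - fderiv ℝ G y‖ * ‖v‖ := ContinuousLinearMap.le_opNorm _ _
      _ ≤ H * ‖y + t • v - y‖ * ‖v‖ := by gcongr; exact hH _
      _ = H * ‖v‖ ^ 2 * t := by
        rw [add_sub_cancel_left, norm_smul, Real.norm_of_nonneg ht.1]; ring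
  have hone := image_norm_le_of_norm_deriv_right_le_deriv_boundary (a := 0) (b := 1)
    (fun t _ => (hremainder t).continuousAt.continuousWithinAt)
    (fun t _ => (hremainder t).hasDerivWithinAt) (by simp) hbound hderiv
    (Set.right_mem_Icc.2 zero_le_one)
  simpa [hv] using hone

lemma mul_norm_newton_step_sub_le {G : E → F} (hG : Differentiable ℝ G) {H μ : ℝ} {xs x y : E}
    (hH : ∀ z, ‖fderiv ℝ G z - fderiv ℝ G xs‖ ≤ H * ‖z - xs‖) (hxs : G xs = 0) {A : E →L[ℝ] F}
    (hA : ∀ v, μ * ‖v‖ ≤ ‖A v‖) (hy : A (y - x) = -G x) :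
    μ * ‖y - xs‖ ≤ ‖A - fderiv ℝ G xs‖ * ‖x - xs‖ + H / 2 * ‖x - xs‖ ^ 2 := by
  have hsplit : A (y - xs)
      = (A - fderiv ℝ G xs) (x - xs) - (G x - G xs - fderiv ℝ G xs (x - xs)) := by
    rw [← sub_add_sub_cancel y x xs, map_add, hy, hxs, _root_.sub_apply]
    abel
  calc μ * ‖y - xs‖ ≤ ‖A (y - xs)‖ := hA _
    _ ≤ ‖(A - fderiv ℝ G xs) (x - xs)‖ + ‖G x - G xs - fderiv ℝ G xs (x - xs)‖ := by
        rw [hsplit]; exact norm_sub_le _ _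
    _ ≤ ‖A - fderiv ℝ G xs‖ * ‖x - xs‖ + H / 2 * ‖x - xs‖ ^ 2 :=
        add_le_add (ContinuousLinearMap.le_opNorm _ _) (norm_sub_sub_fderiv_apply_le hG hH x)

end NormedSpace

section Young

variable {E : Type*} [NormedAddCommGroup E]

lemma norm_add_sq_le_of_sq_le {s t M : ℝ} (hs : 0 ≤ s) (hst : s < t) (hM : 0 ≤ M) {e q : E}
    (he : ‖e‖ ^ 2 ≤ s * M) : ‖e + q‖ ^ 2 ≤ t * M + t / (t - s) * ‖q‖ ^ 2 := by
  have ht : 0 < t - s := sub_pos.2 hst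
  have htri : ‖e + q‖ ^ 2 ≤ (‖e‖ + ‖q‖) ^ 2 := by gcongr; exact norm_add_le _ _
  -- Young's inequality `2 ‖e‖ ‖q‖ ≤ (t - s) M + s / (t - s) ‖q‖²`
  have hyoung : 2 * ‖e‖ * ‖q‖ ≤ (t - s) * M + s / (t - s) * ‖q‖ ^ 2 := by
    refine abs_le_of_sq_le_sq' ?_ (by positivity) |>.2
    have h4 : 4 * ((t - s) * M) * (s / (t - s) * ‖q‖ ^ 2) = 4 * (s * M) * ‖q‖ ^ 2 := by
      field_simp
    nlinarith [sq_nonneg ((t - s) * M - s / (t - s) * ‖q‖ ^ 2),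
      mul_le_mul_of_nonneg_right he (sq_nonneg ‖q‖)]
  have hcoeff : t / (t - s) = 1 + s / (t - s) := by field_simp; ring
  rw [hcoeff]
  linarith

lemma norm_sub_sq_le_of_contraction {δ : ℝ} (hδ0 : 0 < δ) (hδ1 : δ ≤ 1) {p p' a c : E}
    (h : ‖p' - a‖ ^ 2 ≤ (1 - δ) * ‖p - a‖ ^ 2) :
    ‖p' - c‖ ^ 2 ≤ (1 - δ / 4) * ‖p - c‖ ^ 2 + (6 / δ - 7 / 2) * ‖a - c‖ ^ 2 := by
  have hs : 0 < 1 - δ / 2 := by linarith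
  have hnew : ‖p' - c‖ ^ 2 ≤ (1 - δ / 2) * ‖p - a‖ ^ 2 + (2 / δ - 1) * ‖a - c‖ ^ 2 := by
    have := norm_add_sq_le_of_sq_le (t := 1 - δ / 2) (q := a - c) (by linarith) (by linarith)
      (sq_nonneg _) h
    rwa [sub_add_sub_cancel, show (1 - δ / 2) / (1 - δ / 2 - (1 - δ)) = 2 / δ - 1 by
      rw [show 1 - δ / 2 - (1 - δ) = δ / 2 by ring]; field_simp] at this
  have hold : (1 - δ / 2) * ‖p - a‖ ^ 2
      ≤ (1 - δ / 4) * ‖p - c‖ ^ 2 + (4 / δ - 3 + δ / 2) * ‖a - c‖ ^ 2 := by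
    have := norm_add_sq_le_of_sq_le (t := 1 - δ / 4) (e := p - c) (q := c - a)
      (M := ‖p - c‖ ^ 2 / (1 - δ / 2)) hs.le (by linarith) (by positivity)
      (mul_div_cancel₀ _ hs.ne').ge
    rw [sub_add_sub_cancel, norm_sub_rev c a] at this
    refine (mul_le_mul_of_nonneg_left this hs.le).trans_eq ?_
    rw [show 1 - δ / 4 - (1 - δ / 2) = δ / 4 by ring, mul_add, mul_left_comm,
      mul_div_cancel₀ _ hs.ne']
    field_simp
    ring
  have hcoeff : (4 / δ - 3 + δ / 2) + (2 / δ - 1) ≤ 6 / δ - 7 / 2 := by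
    rw [show 6 / δ = 4 / δ + 2 / δ by ring]; linarith
  linarith [mul_le_mul_of_nonneg_right hcoeff (sq_nonneg ‖a - c‖)]

end Young

section CoupledRecursion

variable {h r : ℕ → ℝ}

lemma le_mul_of_coupled_contraction {a b c e : ℝ} (hr : ∀ k, 0 ≤ r k) (hb : 0 ≤ b)
    (hce : c + e ≤ 1) (hrec : ∀ k, r (k + 1) ≤ (a * h k + b * r k) * r k)
    (hah : ∀ k, a * h k ≤ c) (hbr : b * r 0 ≤ e) (k : ℕ) : r (k + 1) ≤ (c + e) * r k := by
  have hstep (k : ℕ) (hk : b * r k ≤ e) : r (k + 1) ≤ (c + e) * r k :=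
    (hrec k).trans (mul_le_mul_of_nonneg_right (add_le_add (hah k) hk) (hr k))
  have hsmall (k : ℕ) : b * r k ≤ e := by
    induction k with
    | zero => exact hbr
    | succ k ih =>
      have hdecr : r (k + 1) ≤ r k :=
        (hstep k ih).trans (mul_le_of_le_one_left (hr k) hce)
      exact (mul_le_mul_of_nonneg_left hdecr hb).trans ih
  exact hstep k (hsmall k)

lemma add_mul_le_pow_mul_of_coupled {α C κ w θ : ℝ} (hh : ∀ k, 0 ≤ h k) (hr : ∀ k, 0 ≤ r k)
    (hw : 0 ≤ w) (hθ : 0 ≤ θ) (hlearn : ∀ k, h (k + 1) ≤ α * h k + C * r k)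
    (hcontr : ∀ k, r (k + 1) ≤ κ * r k) (hα : α ≤ θ) (hκ : C + w * κ ≤ θ * w) (k : ℕ) :
    h k + w * r k ≤ θ ^ k * (h 0 + w * r 0) := by
  refine le_geom (u := fun k => h k + w * r k) hθ k fun j _ => ?_
  calc h (j + 1) + w * r (j + 1)
      ≤ α * h j + C * r j + w * (κ * r j) :=
        add_le_add (hlearn j) (mul_le_mul_of_nonneg_left (hcontr j) hw)
    _ = α * h j + (C + w * κ) * r j := by ring
    _ ≤ θ * h j + θ * w * r j :=
        add_le_add (mul_le_mul_of_nonneg_right hα (hh j)) (mul_le_mul_of_nonneg_right hκ (hr j))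
    _ = θ * (h j + w * r j) := by ring

lemma lyapunov_le_pow_mul_of_coupled {a b α C m : ℝ} (hh : ∀ k, 0 ≤ h k) (hr : ∀ k, 0 ≤ r k)
    (hb : 0 ≤ b) (hC : 0 ≤ C) (hm0 : 0 < m) (hm1 : m ≤ 1)
    (hlearn : ∀ k, h (k + 1) ≤ (1 - α) * h k + C * r k)
    (hrec : ∀ k, r (k + 1) ≤ (a * h k + b * r k) * r k)
    (hah : ∀ k, a * h k ≤ m / 8) (hbr : b * r 0 ≤ m / 8) (k : ℕ) :
    h k + 4 * C / m * r k ≤ (1 - min (4 * α) m / 4) ^ k * (h 0 + 4 * C / m * r 0) := by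
  have hmin := min_le_left (4 * α) m
  have hmin' := min_le_right (4 * α) m
  refine add_mul_le_pow_mul_of_coupled hh hr (by positivity) (by linarith) hlearn
    (le_mul_of_coupled_contraction hr hb (by linarith) hrec hah hbr) (by linarith) ?_ k
  calc C + 4 * C / m * (m / 8 + m / 8) = (m / 4 + m / 4) * (4 * C / m) := by field_simp; ring
    _ ≤ (1 - min (4 * α) m / 4) * (4 * C / m) := by gcongr; linarith

lemma div_le_of_le_mul_of_lyapunov_le {h₀ r₀ r₁ a q w Φ : ℝ} (hh : 0 ≤ h₀) (hr : 0 < r₀)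
    (ha : 0 ≤ a) (hq : 0 ≤ q) (hw : 0 ≤ w) (hrec : r₁ ≤ (a * h₀ + q * w * r₀) * r₀)
    (hΦ : h₀ + w * r₀ ≤ Φ) : r₁ / r₀ ≤ (q + a) * Φ :=
  calc r₁ / r₀ ≤ a * h₀ + q * (w * r₀) := by rwa [div_le_iff₀ hr, ← mul_assoc q]
    _ ≤ a * Φ + q * Φ := by
        have hwr : 0 ≤ w * r₀ := by positivity
        gcongr <;> linarith
    _ = (q + a) * Φ := by ring

end CoupledRecursion

section Gradient

variable {ι E : Type*} [NormedAddCommGroup E] [InnerProductSpace ℝ E] [CompleteSpace E]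

lemma differentiable_gradient_of_contDiff {f : E → ℝ} (hf : ContDiff ℝ 2 f) :
    Differentiable ℝ (gradient f) :=
  (InnerProductSpace.toDual ℝ E).symm.differentiable.comp
    ((hf.fderiv_right (m := 1) (by norm_num)).differentiable (by norm_num))

lemma gradient_const_mul_sum (c : ℝ) (s : Finset ι) {f : ι → E → ℝ}
    (hf : ∀ i ∈ s, Differentiable ℝ (f i)) :
    gradient (fun y => c * ∑ i ∈ s, f i y) = fun y => c • ∑ i ∈ s, gradient (f i) y := by
  funext x
  have hfx : ∀ i ∈ s, DifferentiableAt ℝ (f i) x := fun i hi => hf i hi x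
  unfold gradient
  rw [fderiv_const_mul (DifferentiableAt.fun_sum hfx), fderiv_fun_sum hfx, map_smulₛₗ, map_sum]
  rfl

lemma differentiable_gradient_const_mul_sum (c : ℝ) (s : Finset ι) {f : ι → E → ℝ}
    (hf : ∀ i ∈ s, Differentiable ℝ (f i)) (hgrad : ∀ i ∈ s, Differentiable ℝ (gradient (f i))) :
    Differentiable ℝ (gradient fun y => c * ∑ i ∈ s, f i y) := by
  rw [gradient_const_mul_sum c s hf]
  exact (Differentiable.fun_sum hgrad).fun_const_smul c

end Gradient

section Matrix

variable {d : ℕ}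

/-- The matrix viewed as a vector of its entries, identifying the Frobenius norm and inner product
with the Euclidean ones. -/
noncomputable def flatten :
    Matrix (Fin d) (Fin d) ℝ ≃ₗ[ℝ] EuclideanSpace ℝ (Fin d × Fin d) :=
  (Matrix.ofLinearEquiv ℝ).symm ≪≫ₗ (LinearEquiv.curry ℝ ℝ (Fin d) (Fin d)).symm ≪≫ₗ
    (WithLp.linearEquiv 2 ℝ _).symm

@[simp]
lemma flatten_apply (M : Matrix (Fin d) (Fin d) ℝ) (p : Fin d × Fin d) :
    flatten M p = M p.1 p.2 := rfl

lemma frobSq_eq_sum_flatten_sq (M : Matrix (Fin d) (Fin d) ℝ) :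
    frobSq M = ∑ p, flatten M p ^ 2 := by
  simp only [Fintype.sum_prod_type, frobSq, flatten_apply]

lemma frobSq_eq_norm_flatten_sq (M : Matrix (Fin d) (Fin d) ℝ) :
    frobSq M = ‖flatten M‖ ^ 2 := by
  simp only [frobSq_eq_sum_flatten_sq, EuclideanSpace.norm_sq_eq, Real.norm_eq_abs, sq_abs]

lemma frobNorm_eq_norm_flatten (M : Matrix (Fin d) (Fin d) ℝ) : frobNorm M = ‖flatten M‖ := by
  rw [frobNorm, frobSq_eq_norm_flatten_sq, Real.sqrt_sq (norm_nonneg _)]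

lemma frobInner_eq_inner_flatten (M N : Matrix (Fin d) (Fin d) ℝ) :
    frobInner M N = inner ℝ (flatten M) (flatten N) := by
  simp [PiLp.inner_apply, Fintype.sum_prod_type, frobInner, mul_comm]

lemma frobSq_nonneg (M : Matrix (Fin d) (Fin d) ℝ) : 0 ≤ frobSq M := by
  rw [frobSq_eq_norm_flatten_sq]; positivity

lemma frobNorm_sq (M : Matrix (Fin d) (Fin d) ℝ) : frobNorm M ^ 2 = frobSq M :=
  Real.sq_sqrt (frobSq_nonneg M)

lemma specNorm_le_frobNorm (M : Matrix (Fin d) (Fin d) ℝ) : specNorm M ≤ frobNorm M := by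
  refine ContinuousLinearMap.opNorm_le_bound _ (Real.sqrt_nonneg _) fun v => ?_
  refine (sq_le_sq₀ (norm_nonneg _) (mul_nonneg (Real.sqrt_nonneg _) (norm_nonneg _))).1 ?_
  rw [mul_pow, ← frobNorm, frobNorm_sq, EuclideanSpace.norm_sq_eq, EuclideanSpace.norm_sq_eq,
    frobSq, Finset.sum_mul]
  refine Finset.sum_le_sum fun i _ => ?_
  simp only [Matrix.ofLp_toEuclideanCLM, Matrix.mulVec, dotProduct, Real.norm_eq_abs, sq_abs]
  exact Finset.sum_mul_sq_le_sq_mul_sq _ _ _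

lemma mul_norm_le_norm_toEuclideanCLM {A : Matrix (Fin d) (Fin d) ℝ} {μ : ℝ}
    (hA : (A - μ • (1 : Matrix (Fin d) (Fin d) ℝ)).PosSemidef) (v : EuclideanSpace ℝ (Fin d)) :
    μ * ‖v‖ ≤ ‖Matrix.toEuclideanCLM (𝕜 := ℝ) A v‖ := by
  have hquad : μ * ‖v‖ ^ 2 ≤ inner ℝ v (Matrix.toEuclideanCLM (𝕜 := ℝ) A v) := by
    have hnonneg : 0 ≤ inner ℝ v (Matrix.toEuclideanCLM (𝕜 := ℝ)
        (A - μ • (1 : Matrix (Fin d) (Fin d) ℝ)) v) := by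
      rw [Matrix.inner_toEuclideanCLM]
      simpa using hA.dotProduct_mulVec_nonneg v.ofLp
    rw [map_sub, map_smul, map_one] at hnonneg
    simpa [inner_sub_right, inner_smul_right] using hnonneg
  rcases (norm_nonneg v).eq_or_lt with hv | hv
  · simp [← hv]
  · refine le_of_mul_le_mul_left ?_ hv
    calc ‖v‖ * (μ * ‖v‖) = μ * ‖v‖ ^ 2 := by ring
      _ ≤ inner ℝ v (Matrix.toEuclideanCLM (𝕜 := ℝ) A v) := hquad
      _ ≤ ‖v‖ * ‖Matrix.toEuclideanCLM (𝕜 := ℝ) A v‖ := real_inner_le_norm _ _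

lemma toEuclideanCLM_apply_inv_apply {A : Matrix (Fin d) (Fin d) ℝ} {μ : ℝ} (hμ : 0 < μ)
    (hA : (A - μ • (1 : Matrix (Fin d) (Fin d) ℝ)).PosSemidef) (v : EuclideanSpace ℝ (Fin d)) :
    Matrix.toEuclideanCLM (𝕜 := ℝ) A (Matrix.toEuclideanCLM (𝕜 := ℝ) A⁻¹ v) = v := by
  have hpos : A.PosDef := by simpa using (Matrix.PosDef.one.smul hμ).add_posSemidef hA
  rw [← mul_apply_eq_comp, ← map_mul,
    Matrix.mul_nonsing_inv _ ((Matrix.isUnit_iff_isUnit_det _).1 hpos.isUnit), map_one]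
  rfl

end Matrix

section Hessian

variable {d n : ℕ}

lemma toEuclideanCLM_hess (f : EuclideanSpace ℝ (Fin d) → ℝ) (x : EuclideanSpace ℝ (Fin d)) :
    Matrix.toEuclideanCLM (𝕜 := ℝ) (hess f x) = fderiv ℝ (gradient f) x := by
  apply ContinuousLinearMap.coe_injective
  refine (EuclideanSpace.basisFun (Fin d) ℝ).toBasis.ext fun i => ?_
  ext j
  simp [Matrix.ofLp_toEuclideanCLM, hess]

lemma hess_const_mul_sum {ι : Type*} (c : ℝ) (s : Finset ι) {f : ι → EuclideanSpace ℝ (Fin d) → ℝ}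
    (hf : ∀ i ∈ s, Differentiable ℝ (f i)) {x : EuclideanSpace ℝ (Fin d)}
    (hgrad : ∀ i ∈ s, DifferentiableAt ℝ (gradient (f i)) x) :
    hess (fun y => c * ∑ i ∈ s, f i y) x = c • ∑ i ∈ s, hess (f i) x := by
  ext j l
  simp only [hess, gradient_const_mul_sum c s hf]
  rw [fderiv_fun_const_smul (DifferentiableAt.fun_sum hgrad), fderiv_fun_sum hgrad]
  simp [Matrix.sum_apply, hess]

lemma specNorm_average_sub_le (hn : 1 ≤ n) {M N : Fin n → Matrix (Fin d) (Fin d) ℝ} {b : ℝ}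
    (h : ∀ i, specNorm (M i - N i) ≤ b) :
    specNorm ((1 / (n : ℝ)) • ∑ i, M i - (1 / (n : ℝ)) • ∑ i, N i) ≤ b := by
  have : Nonempty (Fin n) := ⟨⟨0, hn⟩⟩
  rw [← smul_sub, ← Finset.sum_sub_distrib, specNorm, map_smul, map_sum]
  simpa only [Fintype.card_fin] using norm_average_le h

lemma norm_sq_newton_step_sub_le {g : EuclideanSpace ℝ (Fin d) → ℝ}
    (hg : Differentiable ℝ (gradient g)) {μ H N η : ℝ} (hμ : 0 < μ)
    {xs : EuclideanSpace ℝ (Fin d)} (hxs : gradient g xs = 0)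
    (hH : ∀ z, specNorm (hess g z - hess g xs) ≤ H * ‖z - xs‖)
    {A : Matrix (Fin d) (Fin d) ℝ}
    (hA : (A - μ • (1 : Matrix (Fin d) (Fin d) ℝ)).PosSemidef)
    (hAN : frobSq (A - hess g xs) ≤ N * η) (x : EuclideanSpace ℝ (Fin d)) :
    ‖x - Matrix.toEuclideanCLM (𝕜 := ℝ) A⁻¹ (gradient g x) - xs‖ ^ 2
      ≤ (2 * N / μ ^ 2 * η + H ^ 2 / (2 * μ ^ 2) * ‖x - xs‖ ^ 2) * ‖x - xs‖ ^ 2 := by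
  set y := x - Matrix.toEuclideanCLM (𝕜 := ℝ) A⁻¹ (gradient g x) with hy
  set ρ := ‖x - xs‖
  set F := specNorm (A - hess g xs) with hF
  have hF0 : 0 ≤ F := norm_nonneg _
  have hFN : F ^ 2 ≤ N * η := by
    rw [← frobNorm_sq] at hAN
    exact (pow_le_pow_left₀ hF0 (specNorm_le_frobNorm _) 2).trans hAN
  have hstep : μ * ‖y - xs‖ ≤ F * ρ + H / 2 * ρ ^ 2 := by
    rw [hF, specNorm, map_sub, toEuclideanCLM_hess]
    refine mul_norm_newton_step_sub_le hg (fun z => ?_) hxs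
      (mul_norm_le_norm_toEuclideanCLM hA) ?_
    · simpa only [specNorm, map_sub, toEuclideanCLM_hess] using hH z
    · rw [hy, sub_sub_cancel_left, map_neg, toEuclideanCLM_apply_inv_apply hμ hA]
  have hsq : μ ^ 2 * ‖y - xs‖ ^ 2 ≤ (2 * (N * η) + H ^ 2 / 2 * ρ ^ 2) * ρ ^ 2 :=
    calc μ ^ 2 * ‖y - xs‖ ^ 2 = (μ * ‖y - xs‖) ^ 2 := by ring
      _ ≤ (F * ρ + H / 2 * ρ ^ 2) ^ 2 := by gcongr
      _ ≤ 2 * ((F * ρ) ^ 2 + (H / 2 * ρ ^ 2) ^ 2) := add_sq_le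
      _ = (2 * F ^ 2 + H ^ 2 / 2 * ρ ^ 2) * ρ ^ 2 := by ring
      _ ≤ (2 * (N * η) + H ^ 2 / 2 * ρ ^ 2) * ρ ^ 2 := by gcongr
  calc ‖y - xs‖ ^ 2 ≤ (2 * (N * η) + H ^ 2 / 2 * ρ ^ 2) * ρ ^ 2 / μ ^ 2 := by
        rwa [le_div_iff₀' (by positivity)]
    _ = (2 * N / μ ^ 2 * η + H ^ 2 / (2 * μ ^ 2) * ρ ^ 2) * ρ ^ 2 := by ring

end Hessian

section HessianLearning

variable {d n : ℕ}

/-- The matrix with coefficients `C` in the family `B`; BL1 represents Hessians in this form. -/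
noncomputable def basisExpansion (B : Fin d → Fin d → Matrix (Fin d) (Fin d) ℝ) :
    Matrix (Fin d) (Fin d) ℝ →ₗ[ℝ] Matrix (Fin d) (Fin d) ℝ where
  toFun C := ∑ j, ∑ l, C j l • B j l
  map_add' C C' := by simp only [Matrix.add_apply, add_smul, Finset.sum_add_distrib]
  map_smul' c C := by simp only [Matrix.smul_apply, smul_assoc, Finset.smul_sum, RingHom.id_apply]

lemma flatten_basisExpansion (B : Fin d → Fin d → Matrix (Fin d) (Fin d) ℝ)
    (C : Matrix (Fin d) (Fin d) ℝ) :
    flatten (basisExpansion B C) = ∑ p : Fin d × Fin d, flatten C p • flatten (B p.1 p.2) := by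
  simp only [basisExpansion, LinearMap.coe_mk, AddHom.coe_mk, map_sum, map_smul,
    Fintype.sum_prod_type, flatten_apply]

lemma frobSq_basisExpansion_le_of_orthogonal {B : Fin d → Fin d → Matrix (Fin d) (Fin d) ℝ}
    {R : ℝ} (hBR : ∀ j l, frobNorm (B j l) ≤ R)
    (horth : ∀ j l j' l', (j, l) ≠ (j', l') → frobInner (B j l) (B j' l') = 0)
    (C : Matrix (Fin d) (Fin d) ℝ) : frobSq (basisExpansion B C) ≤ R ^ 2 * frobSq C := by
  simp only [frobNorm_eq_norm_flatten, frobInner_eq_inner_flatten] at hBR horth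
  rw [frobSq_eq_norm_flatten_sq, flatten_basisExpansion, frobSq_eq_sum_flatten_sq]
  exact norm_sq_sum_smul_le_of_orthogonal _ (fun p => hBR p.1 p.2)
    fun p q hpq => horth p.1 p.2 q.1 q.2 hpq

lemma frobSq_basisExpansion_le {B : Fin d → Fin d → Matrix (Fin d) (Fin d) ℝ}
    {R : ℝ} (hBR : ∀ j l, frobNorm (B j l) ≤ R) (C : Matrix (Fin d) (Fin d) ℝ) :
    frobSq (basisExpansion B C) ≤ (d : ℝ) ^ 2 * R ^ 2 * frobSq C := by
  simp only [frobNorm_eq_norm_flatten] at hBR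
  rw [frobSq_eq_norm_flatten_sq, flatten_basisExpansion, frobSq_eq_sum_flatten_sq]
  simpa [sq] using norm_sq_sum_smul_le_card_mul (flatten C) fun p : Fin d × Fin d => hBR p.1 p.2

/-- The mean squared Frobenius distance of the coefficient matrices `L i` to the targets `T i`;
`𝓗^k` in the paper is the case `L = L^k`, `T i = ℓ i x*`. -/
noncomputable def meanSqError (L T : Fin n → Matrix (Fin d) (Fin d) ℝ) : ℝ :=
  (1 / (n : ℝ)) * ∑ i, frobSq (L i - T i)

lemma meanSqError_nonneg (L T : Fin n → Matrix (Fin d) (Fin d) ℝ) : 0 ≤ meanSqError L T :=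
  mul_nonneg (by positivity) (Finset.sum_nonneg fun _ _ => frobSq_nonneg _)

lemma frobSq_average_basisExpansion_sub_le
    {B : Fin n → Fin d → Fin d → Matrix (Fin d) (Fin d) ℝ} {N : ℝ}
    (hB : ∀ i C, frobSq (basisExpansion (B i) C) ≤ N * frobSq C)
    (L T : Fin n → Matrix (Fin d) (Fin d) ℝ) :
    frobSq ((1 / (n : ℝ)) • ∑ i, basisExpansion (B i) (L i)
        - (1 / (n : ℝ)) • ∑ i, basisExpansion (B i) (T i))
      ≤ N * meanSqError L T := by
  have hdiff : (1 / (n : ℝ)) • ∑ i, basisExpansion (B i) (L i)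
        - (1 / (n : ℝ)) • ∑ i, basisExpansion (B i) (T i)
      = (1 / (n : ℝ)) • ∑ i, basisExpansion (B i) (L i - T i) := by
    simp only [map_sub, Finset.sum_sub_distrib, smul_sub]
  calc frobSq _ = ‖(1 / (n : ℝ)) • ∑ i, flatten (basisExpansion (B i) (L i - T i))‖ ^ 2 := by
        rw [hdiff, frobSq_eq_norm_flatten_sq, map_smul, map_sum]
    _ ≤ (1 / (n : ℝ)) * ∑ i, ‖flatten (basisExpansion (B i) (L i - T i))‖ ^ 2 := by
        simpa only [Fintype.card_fin] using norm_sq_average_le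
          fun i => flatten (basisExpansion (B i) (L i - T i))
    _ ≤ (1 / (n : ℝ)) * ∑ i, N * frobSq (L i - T i) := by
        gcongr with i
        rw [← frobSq_eq_norm_flatten_sq]
        exact hB i _
    _ = N * meanSqError L T := by rw [meanSqError, ← Finset.mul_sum, mul_left_comm]

lemma meanSqError_le_of_frobSq_le {L L' T : Fin n → Matrix (Fin d) (Fin d) ℝ} {α c : ℝ}
    (hc : 0 ≤ c) (h : ∀ i, frobSq (L' i - T i) ≤ α * frobSq (L i - T i) + c) :
    meanSqError L' T ≤ α * meanSqError L T + c := by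
  have hconst : (1 / (n : ℝ)) * (n * c) ≤ c := by
    rw [← mul_assoc, one_div]
    exact mul_le_of_le_one_left hc inv_mul_le_one
  calc meanSqError L' T ≤ (1 / (n : ℝ)) * ∑ i, (α * frobSq (L i - T i) + c) := by
        unfold meanSqError; gcongr with i; exact h i
    _ = α * meanSqError L T + (1 / (n : ℝ)) * (n * c) := by
        rw [Finset.sum_add_distrib, ← Finset.mul_sum, Finset.sum_const, Finset.card_univ,
          Fintype.card_fin, nsmul_eq_mul, meanSqError]
        ring
    _ ≤ α * meanSqError L T + c := by gcongr

lemma frobSq_add_sub_le_of_contraction {δ : ℝ} (hδ0 : 0 < δ) (hδ1 : δ ≤ 1)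
    {L S T : Matrix (Fin d) (Fin d) ℝ} (hS : frobSq (S - (T - L)) ≤ (1 - δ) * frobSq (T - L))
    (T' : Matrix (Fin d) (Fin d) ℝ) :
    frobSq (L + S - T')
      ≤ (1 - δ / 4) * frobSq (L - T') + (6 / δ - 7 / 2) * frobSq (T - T') := by
  simp only [frobSq_eq_norm_flatten_sq, map_sub, map_add] at hS ⊢
  refine norm_sub_sq_le_of_contraction hδ0 hδ1 ?_
  rwa [norm_sub_rev (flatten L), show flatten L + flatten S - flatten T
    = flatten S - (flatten T - flatten L) by abel]

end HessianLearning

section Method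

variable {d n : ℕ} {f : Fin n → EuclideanSpace ℝ (Fin d) → ℝ} {xs : EuclideanSpace ℝ (Fin d)}
  {B : Fin n → Fin d → Fin d → Matrix (Fin d) (Fin d) ℝ} {N : ℝ}
  {ℓ : Fin n → EuclideanSpace ℝ (Fin d) → Matrix (Fin d) (Fin d) ℝ}

lemma frobSq_sub_hess_average_le (hf : ∀ i, Differentiable ℝ (f i))
    (hgrad : ∀ i, Differentiable ℝ (gradient (f i)))
    (hB : ∀ i C, frobSq (basisExpansion (B i) C) ≤ N * frobSq C)
    (hrep : ∀ i, hess (f i) xs = basisExpansion (B i) (ℓ i xs))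
    {A : Matrix (Fin d) (Fin d) ℝ} {L : Fin n → Matrix (Fin d) (Fin d) ℝ}
    (hA : frobNorm (A - hess (fun y => (1 / (n : ℝ)) * ∑ i, f i y) xs)
      ≤ frobNorm ((1 / (n : ℝ)) • ∑ i, basisExpansion (B i) (L i)
        - hess (fun y => (1 / (n : ℝ)) * ∑ i, f i y) xs)) :
    frobSq (A - hess (fun y => (1 / (n : ℝ)) * ∑ i, f i y) xs)
      ≤ N * meanSqError L (fun i => ℓ i xs) := by
  rw [← frobNorm_sq]
  refine (pow_le_pow_left₀ (Real.sqrt_nonneg _) hA 2).trans ?_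
  rw [frobNorm_sq, hess_const_mul_sum _ _ (fun i _ => hf i) fun i _ => hgrad i xs,
    Finset.sum_congr rfl fun i _ => hrep i]
  exact frobSq_average_basisExpansion_sub_le hB L _

lemma specNorm_hess_average_sub_le (hn : 1 ≤ n) (hf : ∀ i, Differentiable ℝ (f i))
    (hgrad : ∀ i, Differentiable ℝ (gradient (f i))) {z : EuclideanSpace ℝ (Fin d)} {b : ℝ}
    (hH : ∀ i, specNorm (hess (f i) z - hess (f i) xs) ≤ b) :
    specNorm (hess (fun y => (1 / (n : ℝ)) * ∑ i, f i y) z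
      - hess (fun y => (1 / (n : ℝ)) * ∑ i, f i y) xs) ≤ b := by
  rw [hess_const_mul_sum _ _ (fun i _ => hf i) fun i _ => hgrad i z,
    hess_const_mul_sum _ _ (fun i _ => hf i) fun i _ => hgrad i xs]
  exact specNorm_average_sub_le hn hH

lemma meanSqError_learning_step_le {M₁ α c : ℝ} (hc : 0 ≤ c) {z : EuclideanSpace ℝ (Fin d)}
    (hℓ : ∀ i, frobNorm (ℓ i z - ℓ i xs) ≤ M₁ * ‖z - xs‖)
    {L L' : Fin n → Matrix (Fin d) (Fin d) ℝ}
    (hL : ∀ i, frobSq (L' i - ℓ i xs)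
      ≤ α * frobSq (L i - ℓ i xs) + c * frobSq (ℓ i z - ℓ i xs)) :
    meanSqError L' (fun i => ℓ i xs)
      ≤ α * meanSqError L (fun i => ℓ i xs) + c * M₁ ^ 2 * ‖z - xs‖ ^ 2 := by
  refine meanSqError_le_of_frobSq_le (by positivity) fun i => (hL i).trans ?_
  rw [mul_assoc, ← mul_pow, ← frobNorm_sq (ℓ i z - ℓ i xs)]
  gcongr
  · exact Real.sqrt_nonneg _
  · exact hℓ i

lemma norm_sq_bl1_step_sub_le (hn : 1 ≤ n) (hf : ∀ i, Differentiable ℝ (f i))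
    (hgrad : ∀ i, Differentiable ℝ (gradient (f i)))
    {fbar : EuclideanSpace ℝ (Fin d) → ℝ} (hfbar : fbar = fun y => (1 / (n : ℝ)) * ∑ i, f i y)
    {μ H : ℝ} (hμ : 0 < μ) (hxs : gradient fbar xs = 0)
    (hH : ∀ i z, specNorm (hess (f i) z - hess (f i) xs) ≤ H * ‖z - xs‖)
    (hB : ∀ i C, frobSq (basisExpansion (B i) C) ≤ N * frobSq C)
    (hrep : ∀ i, hess (f i) xs = basisExpansion (B i) (ℓ i xs))
    {A : Matrix (Fin d) (Fin d) ℝ} {L : Fin n → Matrix (Fin d) (Fin d) ℝ}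
    (hApsd : (A - μ • (1 : Matrix (Fin d) (Fin d) ℝ)).PosSemidef)
    (hAproj : frobNorm (A - hess fbar xs)
      ≤ frobNorm ((1 / (n : ℝ)) • ∑ i, basisExpansion (B i) (L i) - hess fbar xs))
    (x : EuclideanSpace ℝ (Fin d)) :
    ‖x - Matrix.toEuclideanCLM (𝕜 := ℝ) A⁻¹ (gradient fbar x) - xs‖ ^ 2
      ≤ (2 * N / μ ^ 2 * meanSqError L (fun i => ℓ i xs) + H ^ 2 / (2 * μ ^ 2) * ‖x - xs‖ ^ 2)
        * ‖x - xs‖ ^ 2 := by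
  subst hfbar
  exact norm_sq_newton_step_sub_le
    (differentiable_gradient_const_mul_sum _ _ (fun i _ => hf i) fun i _ => hgrad i) hμ hxs
    (fun z => specNorm_hess_average_sub_le hn hf hgrad fun i => hH i z) hApsd
    (frobSq_sub_hess_average_le hf hgrad hB hrep hAproj) x

lemma exists_hess_lipschitz_sq_eq {H M₁ : ℝ}
    (hH : ∀ i z, specNorm (hess (f i) z - hess (f i) xs) ≤ H * ‖z - xs‖)
    (hrep : ∀ i z, hess (f i) z = basisExpansion (B i) (ℓ i z))
    (hℓ : ∀ i z, frobNorm (ℓ i z - ℓ i xs) ≤ M₁ * ‖z - xs‖) :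
    ∃ H', (∀ i z, specNorm (hess (f i) z - hess (f i) xs) ≤ H' * ‖z - xs‖)
      ∧ H' ^ 2 = H ^ 2 / M₁ ^ 2 * M₁ ^ 2 := by
  rcases eq_or_ne M₁ 0 with rfl | hM
  · -- Here `ℓ`, hence every Hessian, is constant, and the quotient `H ^ 2 / 0` is `0`.
    refine ⟨0, fun i z => ?_, by simp⟩
    have hconst : ℓ i z = ℓ i xs := by
      have hflat : ‖flatten (ℓ i z - ℓ i xs)‖ ≤ 0 := by
        simpa only [frobNorm_eq_norm_flatten, zero_mul] using hℓ i z
      exact sub_eq_zero.1 (flatten.map_eq_zero_iff.1 (norm_le_zero_iff.1 hflat))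
    rw [hrep, hrep, hconst, sub_self, zero_mul, specNorm, map_zero, norm_zero]
  · exact ⟨H, hH, by field_simp⟩

end Method

theorem bl1_superlinear_convergence_general {d n : ℕ} (hn : 1 ≤ n)
    {f : Fin n → EuclideanSpace ℝ (Fin d) → ℝ} (hf : ∀ i, Differentiable ℝ (f i))
    (hgrad : ∀ i, Differentiable ℝ (gradient (f i))) {μ : ℝ} (hμ : 0 < μ)
    {fbar : EuclideanSpace ℝ (Fin d) → ℝ} (hfbar : fbar = fun x => (1 / (n : ℝ)) * ∑ i, f i x)
    {H : ℝ} {xstar : EuclideanSpace ℝ (Fin d)}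
    (hH : ∀ i z, specNorm (hess (f i) z - hess (f i) xstar) ≤ H * ‖z - xstar‖)
    (hstar : gradient fbar xstar = 0)
    {B : Fin n → Fin d → Fin d → Matrix (Fin d) (Fin d) ℝ} {N : ℝ} (hN : 0 ≤ N)
    (hB : ∀ i C, frobSq (basisExpansion (B i) C) ≤ N * frobSq C)
    {ℓ : Fin n → EuclideanSpace ℝ (Fin d) → Matrix (Fin d) (Fin d) ℝ}
    (hrep : ∀ i x, hess (f i) x = basisExpansion (B i) (ℓ i x))
    {M₁ : ℝ} (hℓ : ∀ i z, frobNorm (ℓ i z - ℓ i xstar) ≤ M₁ * ‖z - xstar‖)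
    {Ac Bc AM : ℝ} (hBc : 0 < Bc) (hAM0 : 0 < AM) (hAM1 : AM ≤ 1)
    {x : ℕ → EuclideanSpace ℝ (Fin d)} {L : ℕ → Fin n → Matrix (Fin d) (Fin d) ℝ}
    (hL : ∀ k i, frobSq (L (k + 1) i - ℓ i xstar)
      ≤ (1 - Ac) * frobSq (L k i - ℓ i xstar) + Bc * frobSq (ℓ i (x k) - ℓ i xstar))
    {Hmat : ℕ → Matrix (Fin d) (Fin d) ℝ}
    (hHmat : ∀ k, Hmat k = (1 / (n : ℝ)) • ∑ i, basisExpansion (B i) (L k i))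
    {Hhat : ℕ → Matrix (Fin d) (Fin d) ℝ}
    (hHhatpsd : ∀ k, (Hhat k - μ • (1 : Matrix (Fin d) (Fin d) ℝ)).PosSemidef)
    (hHhatproj : ∀ k, frobNorm (Hhat k - hess fbar xstar) ≤ frobNorm (Hmat k - hess fbar xstar))
    (hx : ∀ k, x (k + 1) = x k
      - Matrix.toEuclideanCLM (𝕜 := ℝ) (Hhat k)⁻¹ (gradient fbar (x k)))
    {𝓗 : ℕ → ℝ} (h𝓗 : ∀ k, 𝓗 k = meanSqError (L k) fun i => ℓ i xstar)
    {Φ₂ : ℕ → ℝ} (hΦ₂ : ∀ k, Φ₂ k = 𝓗 k + (4 * Bc * M₁ ^ 2 / AM) * ‖x k - xstar‖ ^ 2)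
    {θ₁ : ℝ} (hθ₁ : θ₁ = 1 - min (4 * Ac) AM / 4)
    (hx0 : ‖x 0 - xstar‖ ^ 2 * (4 * H ^ 2) ≤ AM * μ ^ 2)
    (h𝓗small : ∀ k, 𝓗 k * (16 * N) ≤ AM * μ ^ 2) :
    (∀ k, Φ₂ k ≤ θ₁ ^ k * Φ₂ 0) ∧
    ∀ k, x k ≠ xstar → ‖x (k + 1) - xstar‖ ^ 2 / ‖x k - xstar‖ ^ 2
      ≤ θ₁ ^ k * (AM * H ^ 2 / (8 * Bc * M₁ ^ 2 * μ ^ 2) + 2 * N / μ ^ 2) * Φ₂ 0 := by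
  have h𝓗0 (k : ℕ) : 0 ≤ 𝓗 k := h𝓗 k ▸ meanSqError_nonneg _ _
  have hnewton {H' : ℝ}
      (hH' : ∀ i z, specNorm (hess (f i) z - hess (f i) xstar) ≤ H' * ‖z - xstar‖) (k : ℕ) :
      ‖x (k + 1) - xstar‖ ^ 2 ≤ (2 * N / μ ^ 2 * 𝓗 k
        + H' ^ 2 / (2 * μ ^ 2) * ‖x k - xstar‖ ^ 2) * ‖x k - xstar‖ ^ 2 := by
    rw [hx, h𝓗]
    exact norm_sq_bl1_step_sub_le hn hf hgrad hfbar hμ hstar hH' hB (fun i => hrep i xstar)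
      (hHhatpsd k) (hHmat k ▸ hHhatproj k) _
  have hlearn (k : ℕ) : 𝓗 (k + 1) ≤ (1 - Ac) * 𝓗 k + Bc * M₁ ^ 2 * ‖x k - xstar‖ ^ 2 := by
    rw [h𝓗, h𝓗]
    exact meanSqError_learning_step_le hBc.le (fun i => hℓ i _) (hL k)
  have hlyap (k : ℕ) : Φ₂ k ≤ θ₁ ^ k * Φ₂ 0 := by
    rw [hΦ₂, hΦ₂, hθ₁, mul_assoc 4]
    refine lyapunov_le_pow_mul_of_coupled (r := fun k => ‖x k - xstar‖ ^ 2) h𝓗0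
      (fun _ => sq_nonneg _) (by positivity) (by positivity) hAM0 hAM1 hlearn (hnewton hH)
      (fun k => ?_) ?_ k
    · rw [div_mul_eq_mul_div, div_le_iff₀ (by positivity)]
      linarith [h𝓗small k]
    · rw [div_mul_eq_mul_div, div_le_iff₀ (by positivity)]
      linarith
  refine ⟨hlyap, fun k hk => ?_⟩
  have hxk : 0 < ‖x k - xstar‖ := norm_pos_iff.2 (sub_ne_zero.2 hk)
  obtain ⟨H', hH', hH'M⟩ := exists_hess_lipschitz_sq_eq hH hrep hℓ
  have hcoeff : H' ^ 2 / (2 * μ ^ 2)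
      = AM * H ^ 2 / (8 * Bc * M₁ ^ 2 * μ ^ 2) * (4 * Bc * M₁ ^ 2 / AM) := by
    rw [hH'M]; field_simp; ring
  rw [mul_right_comm, mul_comm]
  exact div_le_of_le_mul_of_lyapunov_le (h𝓗0 k) (pow_pos hxk 2) (by positivity) (by positivity)
    (by positivity) (hcoeff ▸ hnewton hH' k) (hΦ₂ k ▸ hlyap k)

/-- Theorem 4.9 (superlinear convergence of BL1), in the branch with identity model
compression, `ξ^k ≡ 1`, and deterministic contraction compressors for the Hessians. -/
theorem bl1_superlinear_convergence (d n : ℕ) (hn : 1 ≤ n)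
    (f : Fin n → EuclideanSpace ℝ (Fin d) → ℝ)
    (hf : ∀ i, ContDiff ℝ 2 (f i))
    (μ : ℝ) (hμ : 0 < μ)
    (fbar : EuclideanSpace ℝ (Fin d) → ℝ)
    (hfbar : fbar = fun x => (1 / (n : ℝ)) * ∑ i, f i x)
    (hsc : ∀ x, ((hess fbar x) - μ • (1 : Matrix (Fin d) (Fin d) ℝ)).PosSemidef)
    (H : ℝ)
    (hH : ∀ i x y, specNorm (hess (f i) x - hess (f i) y) ≤ H * ‖x - y‖)
    (xstar : EuclideanSpace ℝ (Fin d)) (hstar : gradient fbar xstar = 0)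
    (R : ℝ) (B : Fin n → Fin d → Fin d → Matrix (Fin d) (Fin d) ℝ)
    (hBR : ∀ i j l, frobNorm (B i j l) ≤ R)
    (ℓ : Fin n → EuclideanSpace ℝ (Fin d) → Matrix (Fin d) (Fin d) ℝ)
    (hrep : ∀ i x, hess (f i) x = ∑ j, ∑ l, (ℓ i x) j l • B i j l)
    (M₁ : ℝ)
    (hℓLip : ∀ i x y, frobNorm (ℓ i x - ℓ i y) ≤ M₁ * ‖x - y‖)
    (NB : ℝ)
    (hNB : NB = if (∀ i (j l j' l' : Fin d), (j, l) ≠ (j', l') →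
        frobInner (B i j l) (B i j' l') = 0) then (1 : ℝ) else (d : ℝ) ^ 2)
    (δ : ℝ) (hδ0 : 0 < δ) (hδ1 : δ ≤ 1)
    (Ac Bc AM BM : ℝ) (hAc : Ac = δ / 4) (hBc : Bc = 6 / δ - 7 / 2)
    (hAM : AM = 1 / 4) (hBM : BM = 5 / 2)
    (x : ℕ → EuclideanSpace ℝ (Fin d))
    (L S : ℕ → Fin n → Matrix (Fin d) (Fin d) ℝ)
    (hS : ∀ k i, frobSq (S k i - (ℓ i (x k) - L k i))
      ≤ (1 - δ) * frobSq (ℓ i (x k) - L k i))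
    (hL : ∀ k i, L (k + 1) i = L k i + S k i)
    (Hmat : ℕ → Matrix (Fin d) (Fin d) ℝ)
    (hHmat : ∀ k, Hmat k = (1 / (n : ℝ)) • ∑ i, ∑ j, ∑ l, (L k i) j l • B i j l)
    (Hhat : ℕ → Matrix (Fin d) (Fin d) ℝ)
    (hHhatsymm : ∀ k, (Hhat k).IsSymm)
    (hHhatpsd : ∀ k, (Hhat k - μ • (1 : Matrix (Fin d) (Fin d) ℝ)).PosSemidef)
    (hHhatproj : ∀ k, frobNorm (Hhat k - hess fbar xstar)
      ≤ frobNorm (Hmat k - hess fbar xstar))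
    (hx : ∀ k, x (k + 1) = x k
      - Matrix.toEuclideanCLM (𝕜 := ℝ) (Hhat k)⁻¹ (gradient fbar (x k)))
    (𝓗 : ℕ → ℝ)
    (h𝓗 : ∀ k, 𝓗 k = (1 / (n : ℝ)) * ∑ i, frobSq (L k i - ℓ i xstar))
    (Φ₂ : ℕ → ℝ)
    (hΦ₂ : ∀ k, Φ₂ k = 𝓗 k + (4 * Bc * M₁ ^ 2 / AM) * ‖x k - xstar‖ ^ 2)
    (θ₁ : ℝ) (hθ₁ : θ₁ = 1 - min (4 * Ac) AM / 4)
    (hnbr1 : ∀ k, ‖x k - xstar‖ ^ 2 ≤ AM * μ ^ 2 / (4 * H ^ 2 * BM))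
    (hnbr2 : ∀ k, 𝓗 k ≤ AM * μ ^ 2 / (16 * NB * R ^ 2 * BM)) :
    (∀ k, Φ₂ k ≤ θ₁ ^ k * Φ₂ 0) ∧
    ((∀ k, x k ≠ xstar) → ∀ k,
      ‖x (k + 1) - xstar‖ ^ 2 / ‖x k - xstar‖ ^ 2
        ≤ θ₁ ^ k * (AM * H ^ 2 / (8 * Bc * M₁ ^ 2 * μ ^ 2)
            + 2 * NB * R ^ 2 / μ ^ 2) * Φ₂ 0) := by
  obtain ⟨hNB0, hB⟩ : 0 ≤ NB ∧ ∀ i C, frobSq (basisExpansion (B i) C) ≤ NB * R ^ 2 * frobSq C := by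
    split_ifs at hNB with horth <;> subst hNB
    · exact ⟨zero_le_one, fun i => by
        simpa only [one_mul] using frobSq_basisExpansion_le_of_orthogonal (hBR i) (horth i)⟩
    · exact ⟨by positivity, fun i => frobSq_basisExpansion_le (hBR i)⟩
  have hBc0 : 0 < Bc := by linarith [le_div_self (by norm_num : (0 : ℝ) ≤ 6) hδ0 hδ1]
  have hbound : 0 ≤ AM * μ ^ 2 := by rw [hAM]; positivity
  have hBM1 : 1 ≤ BM := by rw [hBM]; norm_num
  have hlearn (k : ℕ) (i : Fin n) : frobSq (L (k + 1) i - ℓ i xstar)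
      ≤ (1 - Ac) * frobSq (L k i - ℓ i xstar) + Bc * frobSq (ℓ i (x k) - ℓ i xstar) := by
    rw [hL, hAc, hBc]
    exact frobSq_add_sub_le_of_contraction hδ0 hδ1 (hS k i) _
  have h𝓗small (k : ℕ) : 𝓗 k * (16 * (NB * R ^ 2)) ≤ AM * μ ^ 2 :=
    mul_le_of_le_div_mul hbound (by positivity) hBM1 (by simpa only [mul_assoc] using hnbr2 k)
  obtain ⟨hlyap, hrate⟩ := bl1_superlinear_convergence_general hn
    (fun i => (hf i).differentiable two_ne_zero)
    (fun i => differentiable_gradient_of_contDiff (hf i)) hμ hfbar (fun i z => hH i z xstar) hstar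
    (by positivity) hB hrep (fun i z => hℓLip i z xstar) hBc0 (by linarith) (by linarith)
    hlearn hHmat hHhatpsd hHhatproj hx h𝓗 hΦ₂ hθ₁
    (mul_le_of_le_div_mul hbound (by positivity) hBM1 (hnbr1 0)) h𝓗small
  exact ⟨hlyap, fun hne k => by simpa only [mul_assoc] using hrate k (hne k)⟩
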